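/- arXiv:1410.2342 — 2 statements merged into one kernel-verified Lean document; each statement's English description precedes it below -/
import Mathlib

section
/- If the pair (G, A) is stackable with normal form set C (containing the empty word), then C is closed under taking prefixes: whenever w ∈ C and p is a prefix of w, then p ∈ C. -/
namespace Stk

variable {G : Type*} [Group G] {A : Type*}

/-- Evaluation of a word over the generating alphabet in the group. -/
def eval (ρ : A → G) (w : List A) : G := (w.map ρ).prod

/-- `C` is a set of normal forms: evaluation restricted to `C` is a bijection onto `G`. -/
def IsNormalFormSet (ρ : A → G) (C : Set (List A)) : Prop :=
  ∀ g : G, ∃! w : List A, w ∈ C ∧ eval ρ w = g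

/-- The directed edge `(g, a)` of the Cayley graph is degenerate with respect to `C`. -/
def IsDegenerate (ρ : A → G) (ι : A → A) (C : Set (List A)) (e : G × A) : Prop :=
  ∃ y₁ y₂ : List A, y₁ ∈ C ∧ eval ρ y₁ = e.1 ∧ y₂ ∈ C ∧ eval ρ y₂ = e.1 * ρ e.2 ∧
    (y₁ ++ [e.2] = y₂ ∨ y₁ = y₂ ++ [ι e.2])

/-- A non-degenerate edge is recursive. -/
def IsRecursive (ρ : A → G) (ι : A → A) (C : Set (List A)) (e : G × A) : Prop :=
  ¬ IsDegenerate ρ ι C e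

/-- `e` is one of the edges along the path starting at `g` labeled by the word `w`. -/
def EdgeOnPath (ρ : A → G) (g : G) (w : List A) (e : G × A) : Prop :=
  ∃ i : Fin w.length, e = (g * eval ρ (w.take i), w.get i)

/-- A stackable structure for `(G, A)`: a normal form set `C` containing the empty word,
a well-founded strict partial order `lt` on the recursive edges, and a constant `k`,
such that each edge `(g, a)` admits a word of length at most `k` evaluating to `ρ a`,
each of whose edges along the path from `g` is degenerate or recursive and `lt`-below
`(g, a)`. -/
def IsStackableStructure (ρ : A → G) (ι : A → A) (C : Set (List A))
    (lt : G × A → G × A → Prop) (k : ℕ) : Prop :=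
  ([] : List A) ∈ C ∧ IsNormalFormSet ρ C ∧
  (∀ e e' : G × A, lt e e' → IsRecursive ρ ι C e ∧ IsRecursive ρ ι C e') ∧
  Transitive lt ∧ WellFounded lt ∧
  ∀ g : G, ∀ a : A, ∃ w : List A, w.length ≤ k ∧ eval ρ w = ρ a ∧
    ∀ e' : G × A, EdgeOnPath ρ g w e' → IsDegenerate ρ ι C e' ∨ lt e' (g, a)

/-- The pair `(G, A)` is stackable. -/
def IsStackable (ρ : A → G) (ι : A → A) : Prop :=
  ∃ (C : Set (List A)) (lt : G × A → G × A → Prop) (k : ℕ),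
    IsStackableStructure ρ ι C lt k

/-- A stacking map for a stackable structure. -/
def IsStackingMap (ρ : A → G) (ι : A → A) (C : Set (List A))
    (lt : G × A → G × A → Prop) (k : ℕ) (Φ : G × A → List A) : Prop :=
  ∀ e : G × A, IsRecursive ρ ι C e →
    eval ρ (Φ e) = ρ e.2 ∧ (Φ e).length ≤ k ∧
    ∀ e' : G × A, EdgeOnPath ρ e.1 (Φ e) e' → IsDegenerate ρ ι C e' ∨ lt e' e

/-- A stacking map extended by `Φ (g, a) = [a]` on degenerate edges. -/
def IsExtendedStackingMap (ρ : A → G) (ι : A → A) (C : Set (List A))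
    (lt : G × A → G × A → Prop) (k : ℕ) (Φ : G × A → List A) : Prop :=
  (∀ e : G × A, IsDegenerate ρ ι C e → Φ e = [e.2]) ∧ IsStackingMap ρ ι C lt k Φ

/-- A word is freely reduced if no letter is followed by its formal inverse. -/
def FreelyReduced (ι : A → A) (w : List A) : Prop :=
  List.Chain' (fun a b => b ≠ ι a) w

/-!
Consider the group elements that have a representative all of whose prefixes are normal forms. The
identity is one of them, and a degenerate edge leads from one to another, since it only appends or
deletes the last letter of a normal form. By well-founded induction every recursive edge does so as
well, because it can be replaced by a path of degenerate and smaller recursive edges. Hence a normal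
form `w` has the same value as a word all of whose prefixes are normal forms, and uniqueness of
normal forms identifies `w` with that word.
-/

variable {ρ : A → G} {ι : A → A} {C : Set (List A)}

@[simp]
theorem eval_nil : eval ρ [] = 1 := rfl

@[simp]
theorem eval_cons (a : A) (w : List A) : eval ρ (a :: w) = ρ a * eval ρ w :=
  List.prod_cons

theorem edgeOnPath_cons_self (g : G) (a : A) (w : List A) : EdgeOnPath ρ g (a :: w) (g, a) :=
  ⟨⟨0, Nat.zero_lt_succ _⟩, by simp⟩

theorem EdgeOnPath.cons {g : G} {a : A} {w : List A} {e : G × A}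
    (he : EdgeOnPath ρ (g * ρ a) w e) : EdgeOnPath ρ g (a :: w) e := by
  obtain ⟨i, rfl⟩ := he
  exact ⟨i.succ, by simp [mul_assoc]⟩

theorem mul_eval_mem_of_forall_edgeOnPath {S : Set G} {g : G} {w : List A} (hg : g ∈ S)
    (hS : ∀ e : G × A, EdgeOnPath ρ g w e → e.1 ∈ S → e.1 * ρ e.2 ∈ S) : g * eval ρ w ∈ S := by
  induction w generalizing g with
  | nil => simpa using hg
  | cons a w ih =>
    have hga : g * ρ a ∈ S := hS (g, a) (edgeOnPath_cons_self g a w) hg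
    simpa [mul_assoc] using ih hga fun e he => hS e he.cons

theorem mul_mem_of_wellFounded_of_edgeOnPath {D : Set (G × A)} {lt : G × A → G × A → Prop}
    {S : Set G} (hwf : WellFounded lt)
    (hpath : ∀ e : G × A, ∃ w : List A, eval ρ w = ρ e.2 ∧
      ∀ e' : G × A, EdgeOnPath ρ e.1 w e' → e' ∈ D ∨ lt e' e)
    (hD : ∀ e ∈ D, e.1 ∈ S → e.1 * ρ e.2 ∈ S) (e : G × A) (he : e.1 ∈ S) :
    e.1 * ρ e.2 ∈ S := by
  induction e using hwf.induction with
  | _ e ih =>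
    obtain ⟨w, hw, hedges⟩ := hpath e
    rw [← hw]
    exact mul_eval_mem_of_forall_edgeOnPath he fun e' he' =>
      (hedges e' he').elim (hD e') (ih e')

/-- The largest prefix-closed subset of a set `C` of words: the words all of whose prefixes,
including the word itself, lie in `C`. Its values under `eval` are the group elements along which
the well-founded induction propagates. -/
def prefixInterior (C : Set (List A)) : Set (List A) :=
  {w | ∀ p : List A, p <+: w → p ∈ C}

theorem prefixInterior_subset : prefixInterior C ⊆ C :=
  fun w hw => hw w List.prefix_rfl

theorem nil_mem_prefixInterior (hnil : [] ∈ C) : [] ∈ prefixInterior C :=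
  fun _ hp => List.prefix_nil.mp hp ▸ hnil

theorem mem_prefixInterior_of_prefix {v w : List A} (hw : w ∈ prefixInterior C) (hvw : v <+: w) :
    v ∈ prefixInterior C :=
  fun p hp => hw p (hp.trans hvw)

theorem concat_mem_prefixInterior {w : List A} {a : A} (hw : w ∈ prefixInterior C)
    (hwa : w ++ [a] ∈ C) : w ++ [a] ∈ prefixInterior C := fun p hp =>
  (List.prefix_concat_iff.mp hp).elim (fun h => h ▸ hwa) (hw p)

theorem IsNormalFormSet.injOn (hC : IsNormalFormSet ρ C) : Set.InjOn (eval ρ) C :=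
  fun _ hv w hw h => (hC (eval ρ w)).unique ⟨hv, h⟩ ⟨hw, rfl⟩

theorem IsDegenerate.mul_mem_image_prefixInterior {e : G × A} (he : IsDegenerate ρ ι C e)
    (hC : Set.InjOn (eval ρ) C) (hmem : e.1 ∈ eval ρ '' prefixInterior C) :
    e.1 * ρ e.2 ∈ eval ρ '' prefixInterior C := by
  obtain ⟨y₁, y₂, hy₁, heval₁, hy₂, heval₂, hstep⟩ := he
  obtain ⟨v, hv, hveval⟩ := hmem
  obtain rfl : v = y₁ := hC (prefixInterior_subset hv) hy₁ (hveval.trans heval₁.symm)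
  refine ⟨y₂, ?_, heval₂⟩
  rcases hstep with rfl | rfl
  · exact concat_mem_prefixInterior hv hy₂
  · exact mem_prefixInterior_of_prefix hv (List.prefix_append _ _)

theorem normalForms_prefix_closed_of_stackable_general {lt : G × A → G × A → Prop}
    (hnil : [] ∈ C) (hC : Set.InjOn (eval ρ) C) (hwf : WellFounded lt)
    (hpath : ∀ e : G × A, ∃ w : List A, eval ρ w = ρ e.2 ∧
      ∀ e' : G × A, EdgeOnPath ρ e.1 w e' → IsDegenerate ρ ι C e' ∨ lt e' e) :
    ∀ w ∈ C, ∀ p : List A, p <+: w → p ∈ C := by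
  intro w hw
  have hone : 1 ∈ eval ρ '' prefixInterior C := ⟨[], nil_mem_prefixInterior hnil, eval_nil⟩
  have hedge : ∀ e : G × A, e.1 ∈ eval ρ '' prefixInterior C →
      e.1 * ρ e.2 ∈ eval ρ '' prefixInterior C :=
    mul_mem_of_wellFounded_of_edgeOnPath (D := {e | IsDegenerate ρ ι C e}) hwf hpath
      fun _ he => he.mul_mem_image_prefixInterior hC
  obtain ⟨v, hv, hveval⟩ : 1 * eval ρ w ∈ eval ρ '' prefixInterior C :=
    mul_eval_mem_of_forall_edgeOnPath hone fun e _ => hedge e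
  obtain rfl : v = w := hC (prefixInterior_subset hv) hw (hveval.trans (one_mul _))
  exact hv

/-- the normal form set of a stackable structure is closed under prefixes. -/
theorem normalForms_prefix_closed_of_stackable {G : Type*} [Group G] {A : Type*} [Fintype A]
    (ρ : A → G) (ι : A → A)
    (hgen : Subgroup.closure (Set.range ρ) = ⊤)
    (hne : ∀ a : A, ρ a ≠ 1)
    (hinv : Function.Involutive ι)
    (hρι : ∀ a : A, ρ (ι a) = (ρ a)⁻¹)
    (C : Set (List A)) (lt : G × A → G × A → Prop) (k : ℕ)
    (hstk : IsStackableStructure ρ ι C lt k) :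
    ∀ w ∈ C, ∀ p : List A, p <+: w → p ∈ C := by
  obtain ⟨hnil, hnf, -, -, hwf, hpath⟩ := hstk
  exact normalForms_prefix_closed_of_stackable_general hnil hnf.injOn hwf fun e =>
    (hpath e.1 e.2).imp fun _ hw => hw.2

end Stk
end

section
/- Let (A, R, ρ) be a minimal finite complete rewriting system for a group G. Then there exist a finite type B with decidable equality, a map ρ_B : B → G with ρ_B b ≠ 1 for all b ∈ B, an involution ι : B → B with ρ_B(ι b) = (ρ_B b)⁻¹, an injective map j : {a ∈ A : ρ a ≠ 1} → B with ρ_B ∘ j = ρ on this set, and a finite set of rules R̂ making (B, R̂, ρ_B) a minimal finite complete rewriting system for G whose set of irreducible words is exactly the image under j (applied letterwise) of the set of irreducible words of (A, R). -/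
namespace Stk

variable {G : Type*} [Group G] {A : Type*}

/-- One rewriting step: replace a contiguous occurrence of a left-hand side of a rule by
the corresponding right-hand side. -/
def Rewrites (R : Set (List A × List A)) (w w' : List A) : Prop :=
  ∃ r ∈ R, ∃ x y : List A, w = x ++ r.1 ++ y ∧ w' = x ++ r.2 ++ y

/-- A word is irreducible if it contains no left-hand side of a rule as a contiguous
subword. -/
def RWIrreducible (R : Set (List A × List A)) (w : List A) : Prop :=
  ∀ r ∈ R, ¬ r.1 <:+: w

/-- `(A, R, ρ)` is a finite complete rewriting system for `G`: the rules form a finite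
set of relations of `G`, each group element is represented by exactly one irreducible
word, and there is no infinite sequence of rewritings. -/
def IsCompleteRewritingSystem (ρ : A → G) (R : Set (List A × List A)) : Prop :=
  R.Finite ∧ (∀ r ∈ R, eval ρ r.1 = eval ρ r.2) ∧
  (∀ g : G, ∃! w : List A, RWIrreducible R w ∧ eval ρ w = g) ∧
  WellFounded (fun w' w : List A => Rewrites R w w')

/-- A minimal finite complete rewriting system: right-hand sides and all proper subwords
of left-hand sides are irreducible. -/
def IsMinimalCRS (ρ : A → G) (R : Set (List A × List A)) : Prop :=
  IsCompleteRewritingSystem ρ R ∧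
  ∀ r ∈ R, RWIrreducible R r.2 ∧
    ∀ u : List A, u <:+: r.1 → u ≠ r.1 → RWIrreducible R u

/-!
Discard the letters that are trivial in `G`, together with all rules mentioning them; no irreducible
word contains such a letter, because it would evaluate to `1` just like the empty word. Then adjoin
a new letter `a⁻¹` for every remaining letter `a`, with the single rule `a⁻¹ → N a`, where `N a` is
the normal form of the inverse of `a`. The new letters are reducible, so the irreducible words are
unchanged. Rewriting terminates: replacing every new letter `a⁻¹` by `N a` turns an old rule into a
rewriting over the old alphabet, while a new rule leaves the replaced word fixed and lowers the
number of new letters.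
-/

theorem RWIrreducible.of_infix {R : Set (List A × List A)} {u w : List A}
    (hw : RWIrreducible R w) (h : u <:+: w) : RWIrreducible R u :=
  fun r hr hru => hw r hr (hru.trans h)

theorem IsMinimalCRS.isNormalFormSet {ρ : A → G} {R : Set (List A × List A)}
    (hR : IsMinimalCRS ρ R) : IsNormalFormSet ρ {w | RWIrreducible R w} :=
  hR.1.2.2.1

theorem ne_one_of_mem_of_rwIrreducible {ρ : A → G} {R : Set (List A × List A)}
    (hR : IsNormalFormSet ρ {w | RWIrreducible R w}) {w : List A} (hw : RWIrreducible R w)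
    {a : A} (ha : a ∈ w) : ρ a ≠ 1 := by
  intro hρa
  have ha_irr : RWIrreducible R [a] := hw.of_infix ((List.singleton_infix_iff a w).2 ha)
  have hnil_irr : RWIrreducible R [] := hw.of_infix List.nil_infix
  exact List.cons_ne_nil a [] <|
    (hR 1).unique ⟨ha_irr, by simp [eval, hρa]⟩ ⟨hnil_irr, by simp [eval]⟩

theorem mem_range_map_val_of_rwIrreducible {ρ : A → G} {R : Set (List A × List A)}
    (hR : IsNormalFormSet ρ {w | RWIrreducible R w}) {w : List A} (hw : RWIrreducible R w) :
    w ∈ Set.range (List.map (Subtype.val : {a : A // ρ a ≠ 1} → A)) := by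
  rw [Set.range_list_map]
  exact fun a ha => ⟨⟨a, ne_one_of_mem_of_rwIrreducible hR hw ha⟩, rfl⟩

section Comap

variable {B : Type*} {f : A → B} {R : Set (List B × List B)}

theorem eval_map (ρ : B → G) (f : A → B) (w : List A) : eval ρ (w.map f) = eval (ρ ∘ f) w := by
  simp only [eval, List.map_map]

/-- The pullback of a set of rules along a map of alphabets: the pairs of words whose letterwise
images form a rule. For injective `f` these are the rules with both sides over the subalphabet `A`;
for bijective `f` this renames the letters. -/
def comapRules (f : A → B) (R : Set (List B × List B)) : Set (List A × List A) :=
  Prod.map (List.map f) (List.map f) ⁻¹' R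

theorem Rewrites.map_of_comapRules {w w' : List A} (h : Rewrites (comapRules f R) w w') :
    Rewrites R (w.map f) (w'.map f) := by
  obtain ⟨r, hr, x, y, rfl, rfl⟩ := h
  exact ⟨_, hr, x.map f, y.map f, by simp, by simp⟩

theorem rwIrreducible_comapRules_iff (hrhs : ∀ r ∈ R, r.2 ∈ Set.range (List.map f))
    {w : List A} : RWIrreducible (comapRules f R) w ↔ RWIrreducible R (w.map f) := by
  refine ⟨fun hw r hr hrw => ?_, fun hw r hr hrw => hw _ hr (hrw.map f)⟩
  obtain ⟨u, huw, hu⟩ := List.infix_map_iff.1 hrw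
  obtain ⟨v, hv⟩ := hrhs r hr
  refine hw (u, v) ?_ huw
  rwa [comapRules, Set.mem_preimage, Prod.map_apply, hv, ← hu]

theorem IsCompleteRewritingSystem.comap {ρ : B → G} (hR : IsCompleteRewritingSystem ρ R)
    (hf : Function.Injective f) (hrhs : ∀ r ∈ R, r.2 ∈ Set.range (List.map f))
    (hirr : ∀ w, RWIrreducible R w → w ∈ Set.range (List.map f)) :
    IsCompleteRewritingSystem (ρ ∘ f) (comapRules f R) := by
  obtain ⟨hfin, heval, hnf, hwf⟩ := hR
  have hmap : Function.Injective (List.map f) := List.map_injective_iff.2 hf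
  refine ⟨hfin.preimage (hmap.prodMap hmap).injOn, fun r hr => ?_, fun g => ?_, ?_⟩
  · simpa only [← eval_map, Prod.map] using heval _ hr
  · obtain ⟨w, ⟨hw, hwg⟩, huniq⟩ := hnf g
    obtain ⟨u, rfl⟩ := hirr w hw
    refine ⟨u, ⟨(rwIrreducible_comapRules_iff hrhs).2 hw, by rw [← eval_map, hwg]⟩, ?_⟩
    rintro v ⟨hv, hvg⟩
    exact hmap (huniq _ ⟨(rwIrreducible_comapRules_iff hrhs).1 hv, by rw [eval_map, hvg]⟩)
  · exact Subrelation.wf Rewrites.map_of_comapRules (InvImage.wf (List.map f) hwf)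

theorem IsMinimalCRS.rwIrreducible_comapRules_iff {ρ : B → G} (hR : IsMinimalCRS ρ R)
    (hirr : ∀ w, RWIrreducible R w → w ∈ Set.range (List.map f)) {w : List A} :
    RWIrreducible (comapRules f R) w ↔ RWIrreducible R (w.map f) :=
  Stk.rwIrreducible_comapRules_iff fun r hr => hirr _ (hR.2 r hr).1

theorem IsMinimalCRS.comap {ρ : B → G} (hR : IsMinimalCRS ρ R) (hf : Function.Injective f)
    (hirr : ∀ w, RWIrreducible R w → w ∈ Set.range (List.map f)) :
    IsMinimalCRS (ρ ∘ f) (comapRules f R) := by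
  refine ⟨hR.1.comap hf (fun r hr => hirr _ (hR.2 r hr).1) hirr, fun r hr => ?_⟩
  simp only [hR.rwIrreducible_comapRules_iff hirr]
  exact ⟨(hR.2 _ hr).1, fun u hu hne =>
    (hR.2 _ hr).2 _ (hu.map f) ((List.map_injective_iff.2 hf).ne hne)⟩

end Comap

section Adjoin

variable {B : Type*} {R : Set (List A × List A)} {N : B → List A}

/-- The rules obtained from `R` by adjoining the letters of `B` to the alphabet `A`, each as an
abbreviation `b → N b` of a word over `A`. -/
def adjoinRules (R : Set (List A × List A)) (N : B → List A) :
    Set (List (A ⊕ B) × List (A ⊕ B)) :=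
  Prod.map (List.map Sum.inl) (List.map Sum.inl) '' R ∪
    Set.range fun b => ([Sum.inr b], (N b).map Sum.inl)

/-- The word over `A` obtained by replacing every adjoined letter `b` by `N b`. -/
def expand (N : B → List A) (w : List (A ⊕ B)) : List A :=
  w.flatMap (Sum.elim (fun a => [a]) N)

theorem expand_append (w w' : List (A ⊕ B)) : expand N (w ++ w') = expand N w ++ expand N w' :=
  List.flatMap_append

theorem expand_map_inl (u : List A) : expand N (u.map Sum.inl) = u := by
  simp [expand, List.flatMap_map]

theorem expand_singleton_inr (b : B) : expand N [Sum.inr b] = N b := by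
  simp [expand]

theorem Rewrites.expand_or_countP_lt {w w' : List (A ⊕ B)}
    (h : Rewrites (adjoinRules R N) w w') :
    Rewrites R (expand N w) (expand N w') ∨
      expand N w' = expand N w ∧ w'.countP Sum.isRight < w.countP Sum.isRight := by
  obtain ⟨_, ⟨r, hr, rfl⟩ | ⟨b, rfl⟩, x, y, rfl, rfl⟩ := h
  · refine Or.inl ⟨r, hr, expand N x, expand N y, ?_, ?_⟩ <;>
      simp only [expand_append, expand_map_inl, Prod.map]
  · refine Or.inr ⟨?_, ?_⟩
    · simp only [expand_append, expand_map_inl, expand_singleton_inr]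
    · simp [List.countP_map, List.countP_cons, Function.comp_def]

theorem wellFounded_rewrites_adjoinRules (hR : WellFounded fun w' w => Rewrites R w w') :
    WellFounded fun w' w => Rewrites (adjoinRules R N) w w' := by
  refine Subrelation.wf (fun {w' w} h => ?_) <| InvImage.wf
    (fun w : List (A ⊕ B) => (expand N w, w.countP Sum.isRight))
    (hR.prod_lex (wellFounded_lt (α := ℕ)))
  rw [InvImage, Prod.lex_def]
  exact h.expand_or_countP_lt

theorem rwIrreducible_adjoinRules_iff {w : List (A ⊕ B)} :
    RWIrreducible (adjoinRules R N) w ↔ ∃ u, RWIrreducible R u ∧ u.map Sum.inl = w := by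
  constructor
  · intro hw
    obtain ⟨u, rfl⟩ : w ∈ Set.range (List.map Sum.inl) := by
      rw [Set.range_list_map]
      rintro (a | b) hb
      · exact ⟨a, rfl⟩
      · exact (hw _ (Or.inr ⟨b, rfl⟩) ((List.singleton_infix_iff _ w).2 hb)).elim
    exact ⟨u, fun r hr hru => hw _ (Or.inl ⟨r, hr, rfl⟩) (hru.map Sum.inl), rfl⟩
  · rintro ⟨u, hu, rfl⟩ _ (⟨r, hr, rfl⟩ | ⟨b, rfl⟩) hinfix
    · obtain ⟨t, ht, hrt⟩ := List.infix_map_iff.1 hinfix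
      obtain rfl : r.1 = t := List.map_injective_iff.2 Sum.inl_injective hrt
      exact hu r hr ht
    · simp [List.singleton_infix_iff] at hinfix

theorem IsCompleteRewritingSystem.adjoin [Finite B] {ρ : A → G} {σ : B → G}
    (hR : IsCompleteRewritingSystem ρ R) (hN : ∀ b, eval ρ (N b) = σ b) :
    IsCompleteRewritingSystem (Sum.elim ρ σ) (adjoinRules R N) := by
  obtain ⟨hfin, heval, hnf, hwf⟩ := hR
  have heval_inl (u : List A) : eval (Sum.elim ρ σ) (u.map Sum.inl) = eval ρ u := eval_map _ _ u
  refine ⟨(hfin.image _).union (Set.finite_range _), ?_, fun g => ?_,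
    wellFounded_rewrites_adjoinRules hwf⟩
  · rintro _ (⟨r, hr, rfl⟩ | ⟨b, rfl⟩)
    · simpa only [Prod.map, heval_inl] using heval r hr
    · calc eval (Sum.elim ρ σ) [Sum.inr b] = σ b := by simp [eval]
      _ = eval ρ (N b) := (hN b).symm
      _ = eval (Sum.elim ρ σ) ((N b).map Sum.inl) := (heval_inl (N b)).symm
  · obtain ⟨u, ⟨hu, hug⟩, huniq⟩ := hnf g
    refine ⟨u.map Sum.inl,
      ⟨rwIrreducible_adjoinRules_iff.2 ⟨u, hu, rfl⟩, by rw [heval_inl, hug]⟩, ?_⟩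
    rintro w ⟨hw, hwg⟩
    obtain ⟨v, hv, rfl⟩ := rwIrreducible_adjoinRules_iff.1 hw
    rw [huniq v ⟨hv, by rw [← heval_inl, hwg]⟩]

theorem IsMinimalCRS.adjoin [Finite B] {ρ : A → G} {σ : B → G} (hR : IsMinimalCRS ρ R)
    (hNirr : ∀ b, RWIrreducible R (N b)) (hN : ∀ b, eval ρ (N b) = σ b) :
    IsMinimalCRS (Sum.elim ρ σ) (adjoinRules R N) := by
  obtain ⟨hcomplete, hmin⟩ := hR
  refine ⟨hcomplete.adjoin hN, ?_⟩
  rintro _ (⟨r, hr, rfl⟩ | ⟨b, rfl⟩) <;> simp only [rwIrreducible_adjoinRules_iff]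
  · refine ⟨⟨r.2, (hmin r hr).1, rfl⟩, fun u hu hne => ?_⟩
    obtain ⟨t, ht, rfl⟩ := List.infix_map_iff.1 hu
    exact ⟨t, (hmin r hr).2 t ht (ne_of_apply_ne _ hne), rfl⟩
  · refine ⟨⟨N b, hNirr b, rfl⟩, fun u hu hne => ?_⟩
    obtain rfl : u = [] := ((List.infix_singleton_iff u _).1 hu).resolve_right hne
    exact ⟨[], (hNirr b).of_infix List.nil_infix, rfl⟩

end Adjoin

/-- a minimal finite complete rewriting system can be replaced by a minimal
finite complete rewriting system on a finite symmetric alphabet with decidable equality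
(realized as `Fin n`) with letterwise-corresponding irreducible words. -/
theorem symmetrize_minimal_completeRewritingSystem {G : Type*} [Group G] {A : Type*}
    [Fintype A]
    (ρ : A → G) (R : Set (List A × List A)) (hR : IsMinimalCRS ρ R) :
    ∃ (n : ℕ) (ρB : Fin n → G) (ι : Fin n → Fin n)
      (j : {a : A // ρ a ≠ 1} → Fin n)
      (Rhat : Set (List (Fin n) × List (Fin n))),
      (∀ b : Fin n, ρB b ≠ 1) ∧
      Function.Involutive ι ∧
      (∀ b : Fin n, ρB (ι b) = (ρB b)⁻¹) ∧
      Function.Injective j ∧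
      (∀ a : {a : A // ρ a ≠ 1}, ρB (j a) = ρ a.1) ∧
      IsMinimalCRS ρB Rhat ∧
      {w : List (Fin n) | RWIrreducible Rhat w} =
        {w' : List (Fin n) | ∃ w : List {a : A // ρ a ≠ 1},
          RWIrreducible R (w.map Subtype.val) ∧ w' = w.map j} := by
  have hsub (w) (hw : RWIrreducible R w) := mem_range_map_val_of_rwIrreducible hR.isNormalFormSet hw
  have hS := hR.comap Subtype.val_injective hsub
  choose N hNirr hNeval using fun a : {a : A // ρ a ≠ 1} => (hS.isNormalFormSet (ρ a)⁻¹).exists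
  have hAdj := hS.adjoin hNirr hNeval
  obtain ⟨n, ⟨e⟩⟩ := Finite.exists_equiv_fin ({a : A // ρ a ≠ 1} ⊕ {a : A // ρ a ≠ 1})
  have hren (w) (_ : RWIrreducible (adjoinRules (comapRules Subtype.val R) N) w) :
      w ∈ Set.range (List.map e.symm) := List.map_surjective_iff.2 e.symm.surjective w
  refine ⟨n, _, fun b => e (e.symm b).swap, fun a => e (Sum.inl a), _, fun b => ?_, fun b => ?_,
    fun b => ?_, e.injective.comp Sum.inl_injective, fun a => ?_,
    hAdj.comap e.symm.injective hren, ?_⟩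
  · rcases hb : e.symm b with a | a <;> simp [hb, a.2]
  · simp
  · rcases hb : e.symm b with a | a <;> simp [hb]
  · simp
  · ext w
    simp only [Set.mem_ofPred_eq, hAdj.rwIrreducible_comapRules_iff hren,
      rwIrreducible_adjoinRules_iff, hR.rwIrreducible_comapRules_iff hsub]
    refine exists_congr fun u => and_congr_right fun _ => ?_
    rw [eq_comm, ← (List.map_injective_iff.2 e.injective).eq_iff]
    simp [Function.comp_def]

end Stk
end
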